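/- Fix n ≥ 1 and times 0 < T_1 < … < T_n with k_{j-1}(T_j,T_j) > 0 for j = 1,…,n, suppose Assumptions A and GD hold, and assume k̄_n(1,1) > 0, where k̄_n(t,s) = k̄(t,s) − Σ_{ℓ=1}^{n} k_{ℓ-1}(T_ℓ,T_ℓ) ᾱ_ℓ(t) ᾱ_ℓ(s). Then for all sufficiently small ε > 0 one has k_n(T_n+ε,T_n+ε) > 0, and the function β^ε(t) = k_n(T_n+εt,T_n+ε)/k_n(T_n+ε,T_n+ε) converges, uniformly in t ∈ [0,1] as ε → 0⁺, to β̄(t) = k̄_n(t,1)/k̄_n(1,1). -/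

import Mathlib

open MeasureTheory Filter Topology Set

noncomputable def condCov (k : ℝ → ℝ → ℝ) (T : ℕ → ℝ) : ℕ → ℝ → ℝ → ℝ
  | 0 => k
  | j + 1 => fun t s =>
      condCov k T j t s -
        condCov k T j t (T (j + 1)) / condCov k T j (T (j + 1)) (T (j + 1)) *
          condCov k T j s (T (j + 1))

noncomputable def condRec (k : ℝ → ℝ → ℝ) (T : ℕ → ℝ) (f : ℝ → ℝ → ℝ) : ℕ → ℝ → ℝ → ℝ
  | 0 => f
  | j + 1 => fun t S =>
      condRec k T f j t S -
        condCov k T j S (T (j + 1)) / condCov k T j (T (j + 1)) (T (j + 1)) *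
          condRec k T f j t (T (j + 1))

noncomputable def kbarN (k : ℝ → ℝ → ℝ) (T : ℕ → ℝ) (ρ : ℝ → ℝ → ℝ) (kbar : ℝ → ℝ → ℝ)
    (n : ℕ) (t s : ℝ) : ℝ :=
  kbar t s - ∑ ℓ ∈ Finset.range n, condCov k T ℓ (T (ℓ + 1)) (T (ℓ + 1)) *
    (condRec k T ρ ℓ t (T (ℓ + 1)) / condCov k T ℓ (T (ℓ + 1)) (T (ℓ + 1))) *
    (condRec k T ρ ℓ s (T (ℓ + 1)) / condCov k T ℓ (T (ℓ + 1)) (T (ℓ + 1)))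

/-!
The rectangular increments of `k_j` around the base point obey the same recursion as `k̄_j`:
conditioning at `T_{j+1}` subtracts the product of two first-order increments divided by
`k_j(T_{j+1}, T_{j+1})`. Hence, divided by `γ²`, they converge uniformly to `k̄_n`. Since `k_n`
vanishes whenever one argument is a conditioning time, its rectangular increment around such a time
is `k_n` itself, so the factors `γ²` cancel in the ratio defining `β^ε`.
-/

open Asymptotics

section UniformConvergence

variable {ι α R : Type*} {l : Filter ι} {K : Set α}

lemma tendstoUniformlyOn_iff_isLittleO_one [SeminormedAddCommGroup R] {F : ι → α → R}
    {f : α → R} :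
    TendstoUniformlyOn F f l K ↔
      (fun q : ι × α => F q.1 q.2 - f q.2) =o[l ×ˢ 𝓟 K] (fun _ => (1 : ℝ)) := by
  rw [tendstoUniformlyOn_iff_tendsto, uniformity_eq_comap_nhds_zero, tendsto_comap_iff,
    isLittleO_one_iff]
  rfl

lemma tendstoUniformlyOn_mul_of_isBigO_one [SeminormedRing R] {F G : ι → α → R} {f g : α → R}
    (hF : TendstoUniformlyOn F f l K) (hG : TendstoUniformlyOn G g l K)
    (hf : f =O[𝓟 K] (fun _ => (1 : ℝ))) (hg : g =O[𝓟 K] (fun _ => (1 : ℝ))) :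
    TendstoUniformlyOn (fun i a => F i a * G i a) (fun a => f a * g a) l K := by
  rw [tendstoUniformlyOn_iff_isLittleO_one] at hF hG ⊢
  have hf' := hf.comp_tendsto (tendsto_snd (f := l))
  have hg' := hg.comp_tendsto (tendsto_snd (f := l))
  -- `F G - f g = (F - f) (G - g) + f (G - g) + (F - f) g`
  have hsum := ((hF.mul hG).add (hf'.mul_isLittleO hG)).add (hF.mul_isBigO hg')
  refine hsum.congr (fun q => ?_) fun _ => mul_one 1
  simp only [Function.comp_apply]
  noncomm_ring

lemma tendstoUniformlyOn_div_apply {F : ι → α → ℝ} {c : ι → ℝ} {f : α → ℝ} {a : α}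
    (hF : TendstoUniformlyOn (fun i x => F i x / c i) f l K) (hf : f =O[𝓟 K] (fun _ => (1 : ℝ)))
    (ha : a ∈ K) (hfa : f a ≠ 0) :
    TendstoUniformlyOn (fun i x => F i x / F i a) (fun x => f x / f a) l K := by
  have hlim : Tendsto (fun i => F i a / c i) l (𝓝 (f a)) := hF.tendsto_at ha
  have hmul := tendstoUniformlyOn_mul_of_isBigO_one hF
    ((hlim.inv₀ hfa).tendstoUniformlyOn_const K) hf (isBigO_const_const _ one_ne_zero _)
  refine hmul.congr ?_
  filter_upwards [hlim.eventually_ne hfa] with i hi x _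
  have hc : c i ≠ 0 := fun h => hi (by rw [h, div_zero])
  exact div_div_div_cancel_right₀ hc (F i x) (F i a)

lemma isBigO_one_of_tendstoUniformlyOn [TopologicalSpace α] [SeminormedAddCommGroup R]
    {F : ι → α → R} {f : α → R} (hK : IsCompact K) (hF : TendstoUniformlyOn F f l K)
    (hcont : ∃ᶠ i in l, ContinuousOn (F i) K) : f =O[𝓟 K] (fun _ => (1 : ℝ)) :=
  (hF.continuousOn hcont).isBigO_principal hK (by simp)

end UniformConvergence

/-- The rectangular increment of `κ` over the rectangle with corners `(b, b)` and `(x, y)`; for a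
covariance function it is the covariance of the increments of the process from `b` to `x` and from
`b` to `y`. -/
def rectIncrement {E G : Type*} [AddGroup G] (κ : E → E → G) (b x y : E) : G :=
  κ x y - κ x b - κ b y + κ b b

section Conditioning

variable {k ρ kbar : ℝ → ℝ → ℝ} {T : ℕ → ℝ}

lemma condCov_comm (hk : ∀ t s, k t s = k s t) (n : ℕ) (t s : ℝ) :
    condCov k T n t s = condCov k T n s t := by
  induction n generalizing t s with
  | zero => exact hk t s
  | succ n ih =>
    simp only [condCov]
    rw [ih t s]
    ring

lemma condCov_time_right (hk : ∀ t s, k t s = k s t) {m n : ℕ} (hmn : m < n)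
    (hm : condCov k T m (T (m + 1)) (T (m + 1)) ≠ 0) (t : ℝ) :
    condCov k T n t (T (m + 1)) = 0 := by
  induction n, hmn using Nat.le_induction generalizing t with
  | base => simp only [condCov, div_mul_cancel₀ _ hm, sub_self]
  | succ n _ ih => simp only [condCov, condCov_comm hk n (T (m + 1)), ih, mul_zero, sub_zero]

lemma rectIncrement_condCov_time (hk : ∀ t s, k t s = k s t) {m n : ℕ} (hmn : m < n)
    (hm : condCov k T m (T (m + 1)) (T (m + 1)) ≠ 0) (x y : ℝ) :
    rectIncrement (condCov k T n) (T (m + 1)) x y = condCov k T n x y := by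
  simp only [rectIncrement, condCov_comm hk n (T (m + 1)), condCov_time_right hk hmn hm, sub_zero,
    add_zero]

lemma condCov_succ_sub (n : ℕ) (b x S : ℝ) :
    condCov k T (n + 1) x S - condCov k T (n + 1) b S =
      condCov k T n x S - condCov k T n b S -
        condCov k T n S (T (n + 1)) / condCov k T n (T (n + 1)) (T (n + 1)) *
          (condCov k T n x (T (n + 1)) - condCov k T n b (T (n + 1))) := by
  simp only [condCov]
  ring

lemma rectIncrement_condCov_succ (n : ℕ) (b x y : ℝ) :
    rectIncrement (condCov k T (n + 1)) b x y =
      rectIncrement (condCov k T n) b x y -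
        (condCov k T n x (T (n + 1)) - condCov k T n b (T (n + 1))) *
          ((condCov k T n y (T (n + 1)) - condCov k T n b (T (n + 1))) /
            condCov k T n (T (n + 1)) (T (n + 1))) := by
  simp only [rectIncrement, condCov]
  ring

lemma kbarN_zero : kbarN k T ρ kbar 0 = kbar := by
  ext t s
  simp only [kbarN, Finset.range_zero, Finset.sum_empty, sub_zero]

lemma kbarN_succ (n : ℕ) (t s : ℝ) :
    kbarN k T ρ kbar (n + 1) t s =
      kbarN k T ρ kbar n t s -
        condRec k T ρ n t (T (n + 1)) *
          (condRec k T ρ n s (T (n + 1)) / condCov k T n (T (n + 1)) (T (n + 1))) := by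
  simp only [kbarN, Finset.sum_range_succ]
  rcases eq_or_ne (condCov k T n (T (n + 1)) (T (n + 1))) 0 with hc | hc
  · simp only [hc, div_zero, mul_zero, add_zero, sub_zero]
  · rw [mul_div_cancel₀ _ hc]
    ring

section Boundedness

variable {l : Filter ℝ} {g : ℝ → ℝ} {n : ℕ}

lemma isBigO_condRec (hρ : ∀ j < n, (fun t => ρ t (T (j + 1))) =O[l] g) {S : ℝ}
    (hS : (fun t => ρ t S) =O[l] g) : (fun t => condRec k T ρ n t S) =O[l] g := by
  induction n generalizing S with
  | zero => exact hS
  | succ n ih =>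
    have hρ' : ∀ j < n, (fun t => ρ t (T (j + 1))) =O[l] g := fun j hj => hρ j (by omega)
    exact (ih hρ' hS).sub ((ih hρ' (hρ n n.lt_succ_self)).const_mul_left _)

lemma isBigO_kbarN (hρ : ∀ j < n, (fun t => ρ t (T (j + 1))) =O[l] g) {s : ℝ}
    (hkbar : (fun t => kbar t s) =O[l] g) : (fun t => kbarN k T ρ kbar n t s) =O[l] g := by
  induction n with
  | zero => simpa only [kbarN_zero] using hkbar
  | succ n ih =>
    have hρ' : ∀ j < n, (fun t => ρ t (T (j + 1))) =O[l] g := fun j hj => hρ j (by omega)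
    simp only [kbarN_succ, mul_comm (condRec _ _ _ _ _ _)]
    exact (ih hρ').sub ((isBigO_condRec hρ' (hρ n n.lt_succ_self)).const_mul_left _)

end Boundedness

section Limits

variable {ι : Type*} {l : Filter ι} {K : Set ℝ} {γ : ι → ℝ} {x : ι → ℝ → ℝ} {b : ℝ} {n : ℕ}

lemma tendstoUniformlyOn_condCov_sub_div
    (hA : ∀ j < n, TendstoUniformlyOn (fun i t => (k (x i t) (T (j + 1)) - k b (T (j + 1))) / γ i)
      (fun t => ρ t (T (j + 1))) l K)
    {S : ℝ} (hS : TendstoUniformlyOn (fun i t => (k (x i t) S - k b S) / γ i)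
      (fun t => ρ t S) l K) :
    TendstoUniformlyOn (fun i t => (condCov k T n (x i t) S - condCov k T n b S) / γ i)
      (fun t => condRec k T ρ n t S) l K := by
  induction n generalizing S with
  | zero => exact hS
  | succ n ih =>
    have hA' := fun j (hj : j < n) => hA j (by omega)
    have hscaled := (uniformContinuous_const_smul
      (condCov k T n S (T (n + 1)) / condCov k T n (T (n + 1)) (T (n + 1)))).comp_tendstoUniformlyOn
        (ih hA' (hA n n.lt_succ_self))
    refine ((ih hA' hS).fun_sub hscaled).congr (Eventually.of_forall fun i t _ => ?_)
    simp only [condCov_succ_sub, Function.comp_apply, smul_eq_mul, sub_div, mul_div_assoc]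

lemma tendstoUniformlyOn_rectIncrement_condCov_div {s : ℝ} (hs : s ∈ K)
    (hρ : ∀ j < n, (fun t => ρ t (T (j + 1))) =O[𝓟 K] (fun _ => (1 : ℝ)))
    (hA : ∀ j < n, TendstoUniformlyOn (fun i t => (k (x i t) (T (j + 1)) - k b (T (j + 1))) / γ i)
      (fun t => ρ t (T (j + 1))) l K)
    (hGD : TendstoUniformlyOn (fun i t => rectIncrement k b (x i t) (x i s) / γ i ^ 2)
      (fun t => kbar t s) l K) :
    TendstoUniformlyOn (fun i t => rectIncrement (condCov k T n) b (x i t) (x i s) / γ i ^ 2)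
      (fun t => kbarN k T ρ kbar n t s) l K := by
  induction n with
  | zero => simpa only [kbarN_zero, condCov] using hGD
  | succ n ih =>
    have hρ' : ∀ j < n, (fun t => ρ t (T (j + 1))) =O[𝓟 K] (fun _ => (1 : ℝ)) :=
      fun j hj => hρ j (by omega)
    have hA' := fun j (hj : j < n) => hA j (by omega)
    have hinc := tendstoUniformlyOn_condCov_sub_div hA' (hA n n.lt_succ_self)
    have hcoeff := (hinc.tendsto_at hs).div_const (condCov k T n (T (n + 1)) (T (n + 1)))
    have hprod := tendstoUniformlyOn_mul_of_isBigO_one hinc (hcoeff.tendstoUniformlyOn_const K)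
      (isBigO_condRec hρ' (hρ n n.lt_succ_self)) (isBigO_const_const _ one_ne_zero _)
    simp only [kbarN_succ]
    refine ((ih hρ' hA').fun_sub hprod).congr
      (Eventually.of_forall fun i t _ => ?_)
    simp only [rectIncrement_condCov_succ]
    ring

end Limits

end Conditioning

theorem bridge_coefficient_convergence_general
    {ι : Type*} {l : Filter ι} {K : Set ℝ} {k : ℝ → ℝ → ℝ} {T : ℕ → ℝ} {m n : ℕ} {γ : ι → ℝ}
    {ρ : ℝ → ℝ → ℝ} {kbar : ℝ → ℝ → ℝ} {x : ι → ℝ → ℝ} {s : ℝ}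
    (hmn : m < n) (hs : s ∈ K)
    (hk : ∀ t s, k t s = k s t)
    (hne : ∀ j < n, condCov k T j (T (j + 1)) (T (j + 1)) ≠ 0)
    (hρ : ∀ j < n, (fun t => ρ t (T (j + 1))) =O[𝓟 K] (fun _ => (1 : ℝ)))
    (hkbar : (fun t => kbar t s) =O[𝓟 K] (fun _ => (1 : ℝ)))
    (hA : ∀ j < n, TendstoUniformlyOn
      (fun i t => (k (x i t) (T (j + 1)) - k (T (m + 1)) (T (j + 1))) / γ i)
      (fun t => ρ t (T (j + 1))) l K)
    (hGD : TendstoUniformlyOn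
      (fun i t => rectIncrement k (T (m + 1)) (x i t) (x i s) / γ i ^ 2)
      (fun t => kbar t s) l K)
    (hss : 0 < kbarN k T ρ kbar n s s) :
    (∀ᶠ i in l, 0 < condCov k T n (x i s) (x i s)) ∧
    TendstoUniformlyOn
      (fun i t => condCov k T n (x i t) (x i s) / condCov k T n (x i s) (x i s))
      (fun t => kbarN k T ρ kbar n t s / kbarN k T ρ kbar n s s) l K := by
  have hlim := tendstoUniformlyOn_rectIncrement_condCov_div hs hρ hA hGD
  simp only [rectIncrement_condCov_time hk hmn (hne m hmn)] at hlim
  refine ⟨?_, tendstoUniformlyOn_div_apply hlim (isBigO_kbarN hρ hkbar) hs hss.ne'⟩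
  filter_upwards [(hlim.tendsto_at hs).eventually_const_lt hss] with i hi
  exact pos_of_mul_pos_left hi (inv_nonneg.2 (sq_nonneg (γ i)))

lemma time_succ_pos {T : ℕ → ℝ} {n : ℕ} (hT1 : 0 < T 1)
    (hTmono : ∀ j, 1 ≤ j → j + 1 ≤ n → T j < T (j + 1)) : ∀ j < n, 0 < T (j + 1) := by
  intro j hj
  induction j with
  | zero => exact hT1
  | succ j ih => exact (ih (by omega)).trans (hTmono (j + 1) (by omega) (by omega))

section Continuity

variable {k : ℝ → ℝ → ℝ} {γ : ℝ → ℝ} {b : ℝ}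

lemma continuousOn_shifted_section
    (hk : ContinuousOn (fun p : ℝ × ℝ => k p.1 p.2) (Ici 0 ×ˢ Ici 0)) (hb : 0 ≤ b) {ε S : ℝ}
    (hε : 0 ≤ ε) (hS : 0 ≤ S) : ContinuousOn (fun t => k (b + ε * t) S) (Ici 0) :=
  hk.comp (f := fun t : ℝ => (b + ε * t, S)) (by fun_prop)
    fun _ ht => ⟨add_nonneg hb (mul_nonneg hε ht), hS⟩

lemma isBigO_one_of_tendstoUniformlyOn_sub_div {f : ℝ → ℝ} {S : ℝ}
    (hk : ContinuousOn (fun p : ℝ × ℝ => k p.1 p.2) (Ici 0 ×ˢ Ici 0)) (hb : 0 ≤ b) (hS : 0 ≤ S)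
    (hf : TendstoUniformlyOn (fun ε t => (k (b + ε * t) S - k b S) / γ ε) f
      (𝓝[>] (0 : ℝ)) (Icc 0 1)) :
    f =O[𝓟 (Icc 0 1)] (fun _ => (1 : ℝ)) := by
  refine isBigO_one_of_tendstoUniformlyOn isCompact_Icc hf (Eventually.frequently ?_)
  filter_upwards [self_mem_nhdsWithin] with ε (hε : 0 < ε)
  exact (((continuousOn_shifted_section hk hb hε.le hS).sub continuousOn_const).div_const _).mono
    Icc_subset_Ici_self

lemma isBigO_one_of_tendstoUniformlyOn_rectIncrement_div {f : ℝ → ℝ} {s : ℝ}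
    (hk : ContinuousOn (fun p : ℝ × ℝ => k p.1 p.2) (Ici 0 ×ˢ Ici 0)) (hb : 0 ≤ b) (hs : 0 ≤ s)
    (hf : TendstoUniformlyOn (fun ε t => rectIncrement k b (b + ε * t) (b + ε * s) / γ ε ^ 2) f
      (𝓝[>] (0 : ℝ)) (Icc 0 1)) :
    f =O[𝓟 (Icc 0 1)] (fun _ => (1 : ℝ)) := by
  refine isBigO_one_of_tendstoUniformlyOn isCompact_Icc hf (Eventually.frequently ?_)
  filter_upwards [self_mem_nhdsWithin] with ε (hε : 0 < ε)
  have hsection {S : ℝ} (hS : 0 ≤ S) := continuousOn_shifted_section hk hb hε.le hS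
  have hcorner : 0 ≤ b + ε * s := by positivity
  exact (((((hsection hcorner).sub (hsection hb)).sub continuousOn_const).add
    continuousOn_const).div_const _).mono Icc_subset_Ici_self

end Continuity

/-- Under Assumptions A and GD, if `k̄_n(1,1) > 0` then eventually (as `ε → 0⁺`)
`k_n(T_n+ε,T_n+ε) > 0`, and the regression coefficient
`β^ε(t) = k_n(T_n+εt,T_n+ε)/k_n(T_n+ε,T_n+ε)` of the bridge converges uniformly on `[0,1]`
to `β̄(t) = k̄_n(t,1)/k̄_n(1,1)`. -/
theorem bridge_coefficient_convergence
    (k : ℝ → ℝ → ℝ) (T : ℕ → ℝ) (n : ℕ) (γ : ℝ → ℝ) (ρ : ℝ → ℝ → ℝ) (kbar : ℝ → ℝ → ℝ)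
    (hn : 1 ≤ n)
    (hkcont : ContinuousOn (fun p : ℝ × ℝ => k p.1 p.2) (Ici 0 ×ˢ Ici 0))
    (hksymm : ∀ t s, k t s = k s t)
    (hT1 : 0 < T 1)
    (hTmono : ∀ j, 1 ≤ j → j + 1 ≤ n → T j < T (j + 1))
    (hγpos : ∀ ε : ℝ, 0 < ε → 0 < γ ε)
    (hγ0 : Tendsto γ (𝓝[>] (0:ℝ)) (𝓝 0))
    (hpos : ∀ j < n, 0 < condCov k T j (T (j + 1)) (T (j + 1)))
    (hA : ∀ T' : ℝ, 0 < T' → TendstoUniformlyOn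
        (fun ε t => (k (T n + ε * t) T' - k (T n) T') / γ ε)
        (fun t => ρ t T') (𝓝[>] (0:ℝ)) (Icc 0 1))
    (hGD : TendstoUniformlyOn
        (fun ε (p : ℝ × ℝ) =>
          (k (T n + ε * p.1) (T n + ε * p.2) - k (T n + ε * p.1) (T n) -
            k (T n) (T n + ε * p.2) + k (T n) (T n)) / (γ ε) ^ 2)
        (fun p => kbar p.1 p.2) (𝓝[>] (0:ℝ)) (Icc 0 1 ×ˢ Icc 0 1))
    (hk11 : 0 < kbarN k T ρ kbar n 1 1) :
    (∀ᶠ ε in 𝓝[>] (0:ℝ), 0 < condCov k T n (T n + ε) (T n + ε)) ∧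
    TendstoUniformlyOn
      (fun ε t =>
        condCov k T n (T n + ε * t) (T n + ε) / condCov k T n (T n + ε) (T n + ε))
      (fun t => kbarN k T ρ kbar n t 1 / kbarN k T ρ kbar n 1 1)
      (𝓝[>] (0:ℝ)) (Icc 0 1) := by
  obtain ⟨m, rfl⟩ := Nat.exists_eq_add_of_le' hn
  have hT := time_succ_pos hT1 hTmono
  have hb := (hT m m.lt_succ_self).le
  have h1 : (1 : ℝ) ∈ Icc (0 : ℝ) 1 := right_mem_Icc.2 zero_le_one
  have hGD1 : TendstoUniformlyOn
      (fun ε t => rectIncrement k (T (m + 1)) (T (m + 1) + ε * t) (T (m + 1) + ε * 1) / γ ε ^ 2)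
      (fun t => kbar t 1) (𝓝[>] (0 : ℝ)) (Icc 0 1) :=
    (hGD.comp fun t : ℝ => (t, (1 : ℝ))).mono fun _ ht => ⟨ht, h1⟩
  simpa only [mul_one] using bridge_coefficient_convergence_general m.lt_succ_self h1 hksymm
    (fun j hj => (hpos j hj).ne')
    (fun j hj => isBigO_one_of_tendstoUniformlyOn_sub_div hkcont hb (hT j hj).le (hA _ (hT j hj)))
    (isBigO_one_of_tendstoUniformlyOn_rectIncrement_div hkcont hb zero_le_one hGD1)
    (fun j hj => hA _ (hT j hj)) hGD1 hk11
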